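/- Let M be a linear episodic MDP on (S, A) with horizon H, feature map φ : S×A → ℝ^d, reward distributions q_{M,h}(s,a) that are probability measures supported on [0,1] with means r_{M,h}(s,a), and a unique optimal policy π*_M (for every h and s, Q*_{M,h}(s,·) has a unique maximizer), with gap Δ(M). Let ε > 0 and let ω_1, …, ω_H be probability vectors on S×A such that each Λ(ω_h) is invertible. Then for every linear episodic MDP M' on (S, A) with the same horizon H and feature map φ, with reward distributions q_{M',h}(s,a) supported on [0,1], such that π*_M is not ε-optimal for M', it holds that Σ_{h=1}^H Σ_{(s,a)∈S×A} ω_h(s,a)·KL_{M|M'}(h,s,a) ≥ 3·(Δ(M)+ε)² / (10·H²·Σ_{h=1}^H σ(ω_h)), where KL_{M|M'}(h,s,a) = KL(q_{M,h}(s,a)‖q_{M',h}(s,a)) + KL(p_{M,h}(s,a,·)‖p_{M',h}(s,a,·)). -/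

import Mathlib

/-!
Write `δ_h(s, a)` for the difference, between `M'` and `M`, of the one-step backups of the value
`V` of `π*` in `M`.

*Information.* Donsker–Varadhan together with Hoeffding's lemma gives
`t (𝔼_α f - 𝔼_β f) - (b - a)² t² / 8 ≤ KL(α‖β)` for every `[a, b]`-valued `f`. Adding the bounds for
the reward (range `1`) and for the next value (range `H - h`) at the *same* `t`, and only then
optimizing over `t`, gives `2 δ_h(s, a)² / H² ≤ KL_{M|M'}(h, s, a)`.

*Geometry.* Both models share their features, so `δ_h` is linear in `φ`, and Cauchy–Schwarz in the
norm of `Λ(ω_h)` gives `δ_h(s, a)² ≤ σ(ω_h) D_h` with `D_h = ∑ ω_h δ_h²`.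

*Comparison.* Let `m_h` bound `|δ_h|` and let `E_h = ∑_{k ≥ h} m_k`. In `M'` every policy has value
at most `V_h + E_h`, while `π*` has value at least `V_h - E_h`. A policy behaves like `π*` until it
first deviates, and a deviation costs at least `Δ` in `M`; so in `M'` its advantage over `π*` is at
most `2 E_1 - Δ` if positive. When this advantage exceeds `ε`, we get `Δ + ε ≤ 2 E_1`.

With `m_h = √(σ(ω_h) D_h)`, Cauchy–Schwarz over `h` yields
`(Δ + ε)² ≤ 4 (∑ σ(ω_h)) (∑ D_h) ≤ 2 H² (∑ σ(ω_h)) (∑ ω KL)`.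
-/

open Matrix Finset MeasureTheory
open scoped Classical

/-- Kullback–Leibler divergence between measures: `∫ log (dα/dβ) dα` when `α ≪ β` (and the
log-likelihood ratio is integrable), `+∞` otherwise. -/
noncomputable def klDiv {Ω : Type*} [MeasurableSpace Ω] (α β : Measure Ω) : EReal :=
  if α ≪ β ∧ Integrable (llr α β) α then ((∫ x, llr α β x ∂α : ℝ) : EReal) else ⊤

/-- Kullback–Leibler divergence between probability vectors on a finite set. -/
noncomputable def klFin {S : Type*} [Fintype S] (p q : S → ℝ) : EReal :=
  if ∀ s, q s = 0 → p s = 0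
  then ((∑ s, p s * Real.log (p s / q s) : ℝ) : EReal) else ⊤

/-! ### Divergence bounds for bounded functions -/

section Divergence

variable {Ω : Type*} [MeasurableSpace Ω] {α β : Measure Ω} {f : Ω → ℝ}

/-- The Donsker–Varadhan inequality. -/
lemma integral_sub_log_integral_exp_le_integral_llr [IsProbabilityMeasure α] [SigmaFinite β]
    [NeZero β] (hαβ : α ≪ β) (hllr : Integrable (llr α β) α) (hf : Integrable f α)
    (hexp : Integrable (fun x => Real.exp (f x)) β) :
    ∫ x, f x ∂α - Real.log (∫ x, Real.exp (f x) ∂β) ≤ ∫ x, llr α β x ∂α := by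
  have := isProbabilityMeasure_tilted hexp
  have gibbs := InformationTheory.integral_llr_add_sub_measure_univ_nonneg
    (hαβ.trans (absolutelyContinuous_tilted hexp))
    (integrable_llr_tilted_right hαβ hf hllr hexp)
  rw [integral_llr_tilted_right hαβ hf hexp hllr] at gibbs
  simp only [probReal_univ] at gibbs
  linarith

lemma mul_sub_sq_le_klDiv [IsProbabilityMeasure α] [IsProbabilityMeasure β] {a b : ℝ}
    (hfm : AEMeasurable f β) (hf : ∀ᵐ x ∂β, f x ∈ Set.Icc a b) (t : ℝ) :
    ((t * (∫ x, f x ∂α - ∫ x, f x ∂β) - (b - a) ^ 2 * t ^ 2 / 8 : ℝ) : EReal) ≤ klDiv α β := by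
  unfold klDiv
  split_ifs with h
  swap
  · exact le_top
  obtain ⟨hαβ, hllr⟩ := h
  have hfα : Integrable f α := .of_mem_Icc a b (hfm.mono_ac hαβ) (hαβ.ae_le hf)
  have hsub := ProbabilityTheory.hasSubgaussianMGF_of_mem_Icc hfm hf
  have hcenter : Integrable (fun x => f x - ∫ y, f y ∂β) α := hfα.sub (integrable_const _)
  have donsker := integral_sub_log_integral_exp_le_integral_llr hαβ hllr (hcenter.const_mul t)
    (hsub.integrable_exp_mul t)
  have hoeffding : Real.log (∫ x, Real.exp (t * (f x - ∫ y, f y ∂β)) ∂β) ≤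
      (b - a) ^ 2 * t ^ 2 / 8 := by
    rw [Real.log_le_iff_le_exp (integral_exp_pos (hsub.integrable_exp_mul t))]
    refine (hsub.mgf_le t).trans_eq (congrArg Real.exp ?_)
    simp only [NNReal.coe_pow, NNReal.coe_div, coe_nnnorm, Real.norm_eq_abs, NNReal.coe_ofNat,
      div_pow, sq_abs]
    ring
  rw [integral_const_mul, integral_sub hfα (integrable_const _), integral_const, probReal_univ,
    one_smul] at donsker
  exact EReal.coe_le_coe_iff.2 (by linarith)

end Divergence

section ProbabilityVector

variable {S : Type*} {p q f g : S → ℝ}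

/-- The measure on a finite set with the given point masses, used to transfer divergence bounds from
measures to probability vectors; negative weights count as zero. -/
noncomputable def weightMeasure [MeasurableSpace S] (p : S → ℝ) : Measure S :=
  Measure.count.withDensity fun s => ENNReal.ofReal (p s)

lemma weightMeasure_eq_withDensity_div [MeasurableSpace S] [DiscreteMeasurableSpace S]
    (hq : 0 ≤ q) (hpq : ∀ s, q s = 0 → p s = 0) :
    weightMeasure p = (weightMeasure q).withDensity fun s => ENNReal.ofReal (p s / q s) := by
  rw [weightMeasure, weightMeasure, ← withDensity_mul _ .of_discrete .of_discrete]
  congr 1 with s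
  rw [Pi.mul_apply, ← ENNReal.ofReal_mul (hq s), mul_div_cancel_of_imp' (hpq s)]

instance [Finite S] [MeasurableSpace S] [DiscreteMeasurableSpace S] :
    IsFiniteMeasure (weightMeasure p) :=
  isFiniteMeasure_withDensity_ofReal Integrable.of_finite.hasFiniteIntegral

variable [Fintype S]

lemma dotProduct_le_add_of_mem_stdSimplex {c : ℝ} (hp : p ∈ stdSimplex ℝ S)
    (hfg : ∀ s, f s ≤ g s + c) : p ⬝ᵥ f ≤ p ⬝ᵥ g + c :=
  calc p ⬝ᵥ f ≤ p ⬝ᵥ (g + fun _ => c) := dotProduct_le_dotProduct_of_nonneg_left hfg hp.1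
    _ = p ⬝ᵥ g + c := by
      simp only [dotProduct, Pi.add_apply, mul_add, sum_add_distrib, ← Finset.sum_mul, hp.2,
        one_mul]

section DiscreteMeasurableSpace

variable [MeasurableSpace S] [DiscreteMeasurableSpace S]

lemma isProbabilityMeasure_weightMeasure (hp : p ∈ stdSimplex ℝ S) :
    IsProbabilityMeasure (weightMeasure p) := by
  constructor
  rw [weightMeasure, withDensity_apply _ .univ, Measure.restrict_univ, lintegral_count,
    tsum_fintype, ← ENNReal.ofReal_sum_of_nonneg fun s _ => hp.1 s, hp.2, ENNReal.ofReal_one]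

lemma integral_weightMeasure (hp : 0 ≤ p) (f : S → ℝ) : ∫ s, f s ∂weightMeasure p = p ⬝ᵥ f := by
  rw [weightMeasure, integral_withDensity_eq_integral_toReal_smul (.of_discrete) (by simp),
    integral_count]
  exact Finset.sum_congr rfl fun s _ => by rw [ENNReal.toReal_ofReal (hp s), smul_eq_mul]

lemma klDiv_weightMeasure_le_klFin (hp : 0 ≤ p) (hq : 0 ≤ q) :
    klDiv (weightMeasure p) (weightMeasure q) ≤ klFin p q := by
  unfold klFin
  split_ifs with hpq
  swap
  · exact le_top
  have hdens := weightMeasure_eq_withDensity_div hq hpq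
  have hac : weightMeasure p ≪ weightMeasure q := hdens ▸ withDensity_absolutelyContinuous _ _
  have hllr : llr (weightMeasure p) (weightMeasure q) =ᵐ[weightMeasure p]
      fun s => Real.log (p s / q s) := by
    filter_upwards [hac.ae_le (Measure.rnDeriv_withDensity (weightMeasure q)
      (.of_discrete : Measurable fun s => ENNReal.ofReal (p s / q s)))] with s hs
    rw [llr, hdens, hs, ENNReal.toReal_ofReal (div_nonneg (hp s) (hq s))]
  rw [klDiv, if_pos ⟨hac, .of_finite⟩, integral_congr_ae hllr, integral_weightMeasure hp]
  rfl

end DiscreteMeasurableSpace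

lemma mul_sub_sq_le_klFin {a b : ℝ} (hp : p ∈ stdSimplex ℝ S) (hq : q ∈ stdSimplex ℝ S)
    (hf : ∀ s, f s ∈ Set.Icc a b) (t : ℝ) :
    ((t * (p ⬝ᵥ f - q ⬝ᵥ f) - (b - a) ^ 2 * t ^ 2 / 8 : ℝ) : EReal) ≤ klFin p q := by
  let _ : MeasurableSpace S := ⊤
  have := isProbabilityMeasure_weightMeasure hp
  have := isProbabilityMeasure_weightMeasure hq
  rw [← integral_weightMeasure hp.1, ← integral_weightMeasure hq.1]
  exact (mul_sub_sq_le_klDiv .of_discrete (.of_forall hf) t).trans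
    (klDiv_weightMeasure_le_klFin hp.1 hq.1)

end ProbabilityVector

lemma coe_sum_le_sum {ι : Type*} {t : Finset ι} {x : ι → ℝ} {y : ι → EReal}
    (h : ∀ i ∈ t, (x i : EReal) ≤ y i) : ((∑ i ∈ t, x i : ℝ) : EReal) ≤ ∑ i ∈ t, y i :=
  (map_sum (⟨⟨Real.toEReal, EReal.coe_zero⟩, EReal.coe_add⟩ : ℝ →+ EReal) x t).trans_le
    (Finset.sum_le_sum h)

/-! ### Leverage in a linear model -/

section Leverage

variable {κ ι : Type*} [Fintype κ] [Fintype ι] {φ : κ → ι → ℝ} {w : κ → ℝ}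

/-- The matrix `Λ(w)` of the feature vectors `φ k` with weights `w`. -/
def designMatrix (φ : κ → ι → ℝ) (w : κ → ℝ) : Matrix ι ι ℝ :=
  ∑ k, w k • vecMulVec (φ k) (φ k)

lemma dotProduct_designMatrix_mulVec (φ : κ → ι → ℝ) (w : κ → ℝ) (x y : ι → ℝ) :
    x ⬝ᵥ designMatrix φ w *ᵥ y = ∑ k, w k * ((φ k ⬝ᵥ x) * (φ k ⬝ᵥ y)) := by
  rw [designMatrix, sum_mulVec, dotProduct_sum]
  refine Finset.sum_congr rfl fun k _ => ?_
  rw [smul_mulVec, vecMulVec_mulVec, dotProduct_smul, op_smul_eq_smul, dotProduct_smul,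
    dotProduct_comm x, smul_eq_mul, smul_eq_mul, mul_comm (φ k ⬝ᵥ y)]

variable [DecidableEq ι]

/-- The largest squared norm `σ(w)` of a feature vector in the dual norm of `Λ(w)`. For a singular
`Λ(w)` it is `0`. -/
noncomputable def maxLeverage [Nonempty κ] (φ : κ → ι → ℝ) (w : κ → ℝ) : ℝ :=
  univ.sup' univ_nonempty fun k => φ k ⬝ᵥ (designMatrix φ w)⁻¹ *ᵥ φ k

lemma dotProduct_eq_sum_of_isUnit_designMatrix (hΛ : IsUnit (designMatrix φ w)) (v x : ι → ℝ) :
    v ⬝ᵥ x = ∑ k, w k * ((φ k ⬝ᵥ x) * (φ k ⬝ᵥ (designMatrix φ w)⁻¹ *ᵥ v)) := by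
  rw [← dotProduct_designMatrix_mulVec, mulVec_mulVec,
    mul_nonsing_inv _ ((isUnit_iff_isUnit_det _).1 hΛ), one_mulVec, dotProduct_comm]

lemma dotProduct_designMatrix_inv_mulVec_self (hΛ : IsUnit (designMatrix φ w)) (v : ι → ℝ) :
    v ⬝ᵥ (designMatrix φ w)⁻¹ *ᵥ v = ∑ k, w k * (φ k ⬝ᵥ (designMatrix φ w)⁻¹ *ᵥ v) ^ 2 := by
  simp_rw [sq, ← dotProduct_eq_sum_of_isUnit_designMatrix hΛ]

lemma sq_dotProduct_le_of_isUnit_designMatrix (hw : ∀ k, 0 ≤ w k)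
    (hΛ : IsUnit (designMatrix φ w)) (v x : ι → ℝ) :
    (v ⬝ᵥ x) ^ 2 ≤ (v ⬝ᵥ (designMatrix φ w)⁻¹ *ᵥ v) * ∑ k, w k * (φ k ⬝ᵥ x) ^ 2 := by
  rw [dotProduct_eq_sum_of_isUnit_designMatrix hΛ, dotProduct_designMatrix_inv_mulVec_self hΛ]
  exact Finset.sum_sq_le_sum_mul_sum_of_sq_le_mul _ (fun k _ => mul_nonneg (hw k) (sq_nonneg _))
    (fun k _ => mul_nonneg (hw k) (sq_nonneg _)) fun k _ => by ring_nf; rfl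

variable [Nonempty κ]

lemma dotProduct_designMatrix_inv_mulVec_le_maxLeverage (φ : κ → ι → ℝ) (w : κ → ℝ) (k : κ) :
    φ k ⬝ᵥ (designMatrix φ w)⁻¹ *ᵥ φ k ≤ maxLeverage φ w :=
  Finset.le_sup' (fun k => φ k ⬝ᵥ (designMatrix φ w)⁻¹ *ᵥ φ k) (mem_univ k)

lemma maxLeverage_nonneg (hw : ∀ k, 0 ≤ w k) (hΛ : IsUnit (designMatrix φ w)) :
    0 ≤ maxLeverage φ w := by
  refine le_trans ?_ <|
    dotProduct_designMatrix_inv_mulVec_le_maxLeverage φ w (Classical.arbitrary κ)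
  rw [dotProduct_designMatrix_inv_mulVec_self hΛ]
  exact Finset.sum_nonneg fun k _ => mul_nonneg (hw k) (sq_nonneg _)

lemma sq_dotProduct_le_maxLeverage_mul (hw : ∀ k, 0 ≤ w k) (hΛ : IsUnit (designMatrix φ w))
    (x : ι → ℝ) (k : κ) :
    (φ k ⬝ᵥ x) ^ 2 ≤ maxLeverage φ w * ∑ j, w j * (φ j ⬝ᵥ x) ^ 2 :=
  (sq_dotProduct_le_of_isUnit_designMatrix hw hΛ (φ k) x).trans <| mul_le_mul_of_nonneg_right
    (dotProduct_designMatrix_inv_mulVec_le_maxLeverage φ w k)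
    (Finset.sum_nonneg fun j _ => mul_nonneg (hw j) (sq_nonneg _))

end Leverage

/-! ### Episodic decision processes -/

lemma backward_induction {H h : ℕ} {P : ℕ → Prop} (top : P (H + 1))
    (step : ∀ h ∈ Finset.Icc 1 H, P (h + 1) → P h) (hh : h ∈ Finset.Icc 1 (H + 1)) : P h := by
  rw [Finset.mem_Icc] at hh
  exact Nat.decreasingInduction'
    (fun k hk hhk => step k (Finset.mem_Icc.2 ⟨hh.1.trans hhk, Nat.lt_succ_iff.1 hk⟩)) hh.2 top

lemma sum_Icc_eq_add_sum_Icc_succ {H h : ℕ} (m : ℕ → ℝ) (hh : h ∈ Finset.Icc 1 H) :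
    ∑ k ∈ Finset.Icc h H, m k = m h + ∑ k ∈ Finset.Icc (h + 1) H, m k := by
  rw [← Finset.add_sum_Ioc_eq_sum_Icc (Finset.mem_Icc.1 hh).2, Finset.Icc_add_one_left_eq_Ioc]

/-- An episodic Markov decision process with horizon `H` and reward distributions on `[0, 1]`. Steps
are indexed by `ℕ`, and only those in `{1, …, H}` are constrained. -/
structure EpisodicMDP (S A : Type*) [Fintype S] (H : ℕ) where
  trans : ℕ → S → A → S → ℝ
  reward : ℕ → S → A → ℝ
  rewardLaw : ℕ → S → A → Measure ℝ
  trans_nonneg : ∀ h ∈ Finset.Icc 1 H, ∀ s a s', 0 ≤ trans h s a s'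
  sum_trans : ∀ h ∈ Finset.Icc 1 H, ∀ s a, ∑ s', trans h s a s' = 1
  isProbabilityMeasure_rewardLaw :
    ∀ h ∈ Finset.Icc 1 H, ∀ s a, IsProbabilityMeasure (rewardLaw h s a)
  rewardLaw_compl_Icc : ∀ h ∈ Finset.Icc 1 H, ∀ s a, rewardLaw h s a (Set.Icc (0 : ℝ) 1)ᶜ = 0
  integral_rewardLaw : ∀ h ∈ Finset.Icc 1 H, ∀ s a, ∫ x, x ∂rewardLaw h s a = reward h s a

namespace EpisodicMDP

variable {S A : Type*} [Fintype S] {H : ℕ} {M M' : EpisodicMDP S A H} {h : ℕ}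

/-- The expected return of action `a` in state `s` at step `h` when the values at step `h + 1` are
`v`. -/
def backup (M : EpisodicMDP S A H) (h : ℕ) (v : S → ℝ) (s : S) (a : A) : ℝ :=
  M.reward h s a + M.trans h s a ⬝ᵥ v

/-- `V` is the value function of the policy `π`. -/
structure IsPolicyValue (M : EpisodicMDP S A H) (π : ℕ → S → A) (V : ℕ → S → ℝ) : Prop where
  apply_horizon_add_one : ∀ s, V (H + 1) s = 0
  eq_backup : ∀ h ∈ Finset.Icc 1 H, ∀ s, V h s = M.backup h (V (h + 1)) s (π h s)

/-- `V` and `Q` are the optimal value and action-value functions. -/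
structure IsOptimalValue [Fintype A] [Nonempty A] (M : EpisodicMDP S A H) (V : ℕ → S → ℝ)
    (Q : ℕ → S → A → ℝ) : Prop where
  apply_horizon_add_one : ∀ s, V (H + 1) s = 0
  eq_backup : ∀ h ∈ Finset.Icc 1 H, ∀ s a, Q h s a = M.backup h (V (h + 1)) s a
  eq_sup' : ∀ h ∈ Finset.Icc 1 H, ∀ s, V h s = univ.sup' univ_nonempty fun a => Q h s a

/-- When `V` is the value function of `π`, every one-step deviation from `π` costs at least `Δ`. -/
def HasGap (M : EpisodicMDP S A H) (π : ℕ → S → A) (V : ℕ → S → ℝ) (Δ : ℝ) : Prop :=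
  ∀ h ∈ Finset.Icc 1 H, ∀ s a, a ≠ π h s → Δ ≤ V h s - M.backup h (V (h + 1)) s a

/-- The rewards and transition probabilities are linear in the feature map `φ`. -/
def IsLinear {ι : Type*} [Fintype ι] (M : EpisodicMDP S A H) (φ : S → A → ι → ℝ) : Prop :=
  ∃ (θ : ℕ → ι → ℝ) (μ : ℕ → S → ι → ℝ),
    (∀ h ∈ Finset.Icc 1 H, ∀ s a, M.reward h s a = φ s a ⬝ᵥ θ h) ∧
    ∀ h ∈ Finset.Icc 1 H, ∀ s a t, M.trans h s a t = φ s a ⬝ᵥ μ h t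

/-- The information `KL_{M|M'}(h, s, a)` gained against `M'` from one observation of the reward and
of the next state. -/
noncomputable def kl (M M' : EpisodicMDP S A H) (h : ℕ) (s : S) (a : A) : EReal :=
  klDiv (M.rewardLaw h s a) (M'.rewardLaw h s a) + klFin (M.trans h s a) (M'.trans h s a)

/-- The change of a one-step backup of the value function `V` when `M` is replaced by `M'`. -/
def backupDiff (M M' : EpisodicMDP S A H) (V : ℕ → S → ℝ) (h : ℕ) (sa : S × A) : ℝ :=
  M'.backup h (V (h + 1)) sa.1 sa.2 - M.backup h (V (h + 1)) sa.1 sa.2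

lemma trans_mem_stdSimplex (M : EpisodicMDP S A H) (hh : h ∈ Finset.Icc 1 H) (s : S) (a : A) :
    M.trans h s a ∈ stdSimplex ℝ S :=
  ⟨M.trans_nonneg h hh s a, M.sum_trans h hh s a⟩

lemma reward_mem_Icc (M : EpisodicMDP S A H) (hh : h ∈ Finset.Icc 1 H) (s : S) (a : A) :
    M.reward h s a ∈ Set.Icc (0 : ℝ) 1 := by
  have := M.isProbabilityMeasure_rewardLaw h hh s a
  have hsupp : ∀ᵐ x ∂M.rewardLaw h s a, x ∈ Set.Icc (0 : ℝ) 1 := M.rewardLaw_compl_Icc h hh s a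
  rw [← M.integral_rewardLaw h hh]
  exact (convex_Icc 0 1).integral_mem isClosed_Icc hsupp
    (.of_mem_Icc 0 1 measurable_id.aemeasurable hsupp)

lemma backup_le_backup_add (M : EpisodicMDP S A H) (hh : h ∈ Finset.Icc 1 H) {v w : S → ℝ} {c : ℝ}
    (hvw : ∀ s, v s ≤ w s + c) (s : S) (a : A) : M.backup h v s a ≤ M.backup h w s a + c := by
  have := dotProduct_le_add_of_mem_stdSimplex (M.trans_mem_stdSimplex hh s a) hvw
  simp only [backup]
  linarith

lemma IsPolicyValue.mem_Icc {π : ℕ → S → A} {V : ℕ → S → ℝ} (hV : M.IsPolicyValue π V)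
    (hh : h ∈ Finset.Icc 1 (H + 1)) : ∀ s, V h s ∈ Set.Icc (0 : ℝ) (H + 1 - h) := by
  refine backward_induction (P := fun h => ∀ s, V h s ∈ Set.Icc (0 : ℝ) (H + 1 - h))
    (fun s => by simp [hV.apply_horizon_add_one]) (fun h hh ih s => ?_) hh
  have hreward := M.reward_mem_Icc hh s (π h s)
  have hp := M.trans_mem_stdSimplex hh s (π h s)
  have hlow : 0 ≤ M.trans h s (π h s) ⬝ᵥ V (h + 1) :=
    dotProduct_nonneg_of_nonneg hp.1 fun s' => (ih s').1
  have hup := dotProduct_le_add_of_mem_stdSimplex (g := 0) hp fun s' => by simpa using (ih s').2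
  rw [dotProduct_zero] at hup
  rw [hV.eq_backup h hh, backup]
  constructor <;> linarith [hreward.1, hreward.2]

section Optimal

variable [Fintype A] [Nonempty A] {V : ℕ → S → ℝ} {Q : ℕ → S → A → ℝ}

lemma IsOptimalValue.le (hV : M.IsOptimalValue V Q) (hh : h ∈ Finset.Icc 1 H) (s : S) (a : A) :
    Q h s a ≤ V h s :=
  hV.eq_sup' h hh s ▸ Finset.le_sup' (Q h s) (mem_univ a)

lemma IsOptimalValue.isPolicyValue {π : ℕ → S → A} (hV : M.IsOptimalValue V Q)
    (hπ : ∀ h ∈ Finset.Icc 1 H, ∀ s a, Q h s a ≤ Q h s (π h s)) : M.IsPolicyValue π V where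
  apply_horizon_add_one := hV.apply_horizon_add_one
  eq_backup h hh s := by
    rw [← hV.eq_backup h hh]
    exact (hV.le hh s _).antisymm' (hV.eq_sup' h hh s ▸ Finset.sup'_le _ _ fun a _ => hπ h hh s a)

lemma IsOptimalValue.exists_isPolicyValue (hV : M.IsOptimalValue V Q) :
    ∃ π, M.IsPolicyValue π V := by
  choose π hπ using fun h s => Finite.exists_max (Q h s)
  exact ⟨π, hV.isPolicyValue fun h _ s => hπ h s⟩

end Optimal

/-! ### Information lower bounds -/

lemma mul_sub_sq_le_kl {v : S → ℝ} {B : ℝ} (hh : h ∈ Finset.Icc 1 H)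
    (hv : ∀ s, v s ∈ Set.Icc 0 B) (s : S) (a : A) (t : ℝ) :
    ((t * (M.backup h v s a - M'.backup h v s a) - (1 + B ^ 2) * t ^ 2 / 8 : ℝ) : EReal) ≤
      M.kl M' h s a := by
  have := M.isProbabilityMeasure_rewardLaw h hh s a
  have := M'.isProbabilityMeasure_rewardLaw h hh s a
  have hreward := mul_sub_sq_le_klDiv (α := M.rewardLaw h s a) (f := id)
    measurable_id.aemeasurable (M'.rewardLaw_compl_Icc h hh s a) t
  have htrans := mul_sub_sq_le_klFin (M.trans_mem_stdSimplex hh s a)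
    (M'.trans_mem_stdSimplex hh s a) hv t
  refine le_trans (le_of_eq ?_) (add_le_add hreward htrans)
  simp only [id, M.integral_rewardLaw h hh, M'.integral_rewardLaw h hh, ← EReal.coe_add, backup]
  ring_nf

lemma two_mul_sq_backupDiff_div_le_kl {V : ℕ → S → ℝ} (hh : h ∈ Finset.Icc 1 H)
    (hV : ∀ s, V (h + 1) s ∈ Set.Icc (0 : ℝ) (H - h)) (sa : S × A) :
    ((2 * M.backupDiff M' V h sa ^ 2 / H ^ 2 : ℝ) : EReal) ≤ M.kl M' h sa.1 sa.2 := by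
  -- the maximizer of the quadratic lower bound `-t δ - H² t² / 8`
  set t := -4 * M.backupDiff M' V h sa / H ^ 2 with ht
  refine le_trans (EReal.coe_le_coe_iff.2 ?_) (mul_sub_sq_le_kl hh hV sa.1 sa.2 t)
  rw [Finset.mem_Icc] at hh
  have h_one_le : (1 : ℝ) ≤ h := mod_cast hh.1
  have h_le : (h : ℝ) ≤ H := mod_cast hh.2
  have hrange : 1 + ((H : ℝ) - h) ^ 2 ≤ H ^ 2 := by nlinarith
  calc 2 * M.backupDiff M' V h sa ^ 2 / H ^ 2
      = t * -M.backupDiff M' V h sa - H ^ 2 * t ^ 2 / 8 := by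
        rw [ht]
        field_simp
        ring
    _ ≤ t * -M.backupDiff M' V h sa - (1 + ((H : ℝ) - h) ^ 2) * t ^ 2 / 8 := by gcongr
    _ = _ := by rw [backupDiff, neg_sub]

lemma coe_sum_sq_backupDiff_le_sum_kl [Fintype A] {π : ℕ → S → A} {V : ℕ → S → ℝ}
    (hV : M.IsPolicyValue π V) {ω : ℕ → S × A → ℝ}
    (hω : ∀ h ∈ Finset.Icc 1 H, ∀ sa, 0 ≤ ω h sa) :
    ((2 / H ^ 2 * ∑ h ∈ Finset.Icc 1 H, ∑ sa, ω h sa * M.backupDiff M' V h sa ^ 2 : ℝ) : EReal) ≤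
      ∑ h ∈ Finset.Icc 1 H, ∑ sa : S × A, (ω h sa : EReal) * M.kl M' h sa.1 sa.2 := by
  simp_rw [Finset.mul_sum]
  refine coe_sum_le_sum fun h hh => coe_sum_le_sum fun sa _ => ?_
  have hrange (s : S) : V (h + 1) s ∈ Set.Icc (0 : ℝ) (H - h) := by
    have hh' : h + 1 ∈ Finset.Icc 1 (H + 1) := by simp_all
    simpa using hV.mem_Icc hh' s
  calc ((2 / H ^ 2 * (ω h sa * M.backupDiff M' V h sa ^ 2) : ℝ) : EReal)
      = (ω h sa : EReal) * ((2 * M.backupDiff M' V h sa ^ 2 / H ^ 2 : ℝ) : EReal) := by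
        rw [← EReal.coe_mul]
        ring_nf
    _ ≤ (ω h sa : EReal) * M.kl M' h sa.1 sa.2 :=
      mul_le_mul_of_nonneg_left (two_mul_sq_backupDiff_div_le_kl hh hrange sa)
        (EReal.coe_nonneg.2 (hω h hh sa))

/-! ### Linear models -/

section Linear

variable {ι : Type*} [Fintype ι] {φ : S → A → ι → ℝ}

lemma IsLinear.exists_backup_eq_dotProduct (hM : M.IsLinear φ) (hh : h ∈ Finset.Icc 1 H)
    (v : S → ℝ) : ∃ x : ι → ℝ, ∀ s a, M.backup h v s a = φ s a ⬝ᵥ x := by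
  obtain ⟨θ, μ, hreward, htrans⟩ := hM
  refine ⟨θ h + ∑ s', v s' • μ h s', fun s a => ?_⟩
  simp_rw [backup, hreward h hh, dotProduct_add, dotProduct_sum, dotProduct_smul, ← htrans h hh,
    smul_eq_mul, mul_comm (v _)]
  rfl

variable [DecidableEq ι] [Fintype A] [Nonempty (S × A)]

lemma sq_backupDiff_le_maxLeverage_mul (hM : M.IsLinear φ) (hM' : M'.IsLinear φ)
    {w : S × A → ℝ} (hw : ∀ sa, 0 ≤ w sa) (hΛ : IsUnit (designMatrix (Function.uncurry φ) w))
    (hh : h ∈ Finset.Icc 1 H) (V : ℕ → S → ℝ) (sa : S × A) :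
    M.backupDiff M' V h sa ^ 2 ≤
      maxLeverage (Function.uncurry φ) w * ∑ sa, w sa * M.backupDiff M' V h sa ^ 2 := by
  obtain ⟨x, hx⟩ := hM.exists_backup_eq_dotProduct hh (V (h + 1))
  obtain ⟨x', hx'⟩ := hM'.exists_backup_eq_dotProduct hh (V (h + 1))
  simp_rw [backupDiff, hx, hx', ← dotProduct_sub]
  exact sq_dotProduct_le_maxLeverage_mul hw hΛ (x' - x) sa

end Linear

/-! ### Comparison of values -/

section Comparison

variable {π π' : ℕ → S → A} {V U W : ℕ → S → ℝ} {m : ℕ → ℝ} {Δ ε : ℝ}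

lemma IsPolicyValue.le_add_sum_of_backup_le (hW : M.IsPolicyValue π W)
    (hVtop : ∀ s, V (H + 1) s = 0)
    (hV : ∀ h ∈ Finset.Icc 1 H, ∀ s, M.backup h (V (h + 1)) s (π h s) ≤ V h s + m h)
    (hh : h ∈ Finset.Icc 1 (H + 1)) : ∀ s, W h s ≤ V h s + ∑ k ∈ Finset.Icc h H, m k := by
  refine backward_induction (P := fun h => ∀ s, W h s ≤ V h s + ∑ k ∈ Finset.Icc h H, m k)
    (fun s => by simp [hW.apply_horizon_add_one, hVtop]) (fun h hh ih s => ?_) hh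
  linarith [hW.eq_backup h hh s, M.backup_le_backup_add hh ih s (π h s), hV h hh s,
    sum_Icc_eq_add_sum_Icc_succ m hh]

lemma IsPolicyValue.le_add_sum_of_le_backup (hU : M.IsPolicyValue π U)
    (hVtop : ∀ s, V (H + 1) s = 0)
    (hV : ∀ h ∈ Finset.Icc 1 H, ∀ s, V h s ≤ M.backup h (V (h + 1)) s (π h s) + m h)
    (hh : h ∈ Finset.Icc 1 (H + 1)) : ∀ s, V h s ≤ U h s + ∑ k ∈ Finset.Icc h H, m k := by
  refine backward_induction (P := fun h => ∀ s, V h s ≤ U h s + ∑ k ∈ Finset.Icc h H, m k)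
    (fun s => by simp [hU.apply_horizon_add_one, hVtop]) (fun h hh ih s => ?_) hh
  linarith [hU.eq_backup h hh s, M.backup_le_backup_add hh ih s (π h s), hV h hh s,
    sum_Icc_eq_add_sum_Icc_succ m hh]

lemma HasGap.backup_le (hgap : M.HasGap π V Δ) (hV : M.IsPolicyValue π V) (hΔ : 0 ≤ Δ)
    (hh : h ∈ Finset.Icc 1 H) (s : S) (a : A) : M.backup h (V (h + 1)) s a ≤ V h s := by
  by_cases ha : a = π h s
  · rw [ha, hV.eq_backup h hh]
  · linarith [hgap h hh s a ha]

lemma HasGap.le_add_max (hgap : M.HasGap π V Δ) (hΔ : 0 ≤ Δ) (hV : M.IsPolicyValue π V)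
    (hU : M'.IsPolicyValue π U) (hW : M'.IsPolicyValue π' W)
    (hm : ∀ h ∈ Finset.Icc 1 H, ∀ sa, |M.backupDiff M' V h sa| ≤ m h)
    (hh : h ∈ Finset.Icc 1 (H + 1)) :
    ∀ s, W h s ≤ U h s + max 0 (2 * ∑ k ∈ Finset.Icc h H, m k - Δ) := by
  have hdiff (h) (hh : h ∈ Finset.Icc 1 H) (s a) :=
    abs_le.1 (hm h hh (s, a))
  simp only [backupDiff] at hdiff
  have hW_le {h} (hh : h ∈ Finset.Icc 1 (H + 1)) :=
    hW.le_add_sum_of_backup_le hV.apply_horizon_add_one (m := m) (hh := hh) fun h hh s => by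
      linarith [hdiff h hh s (π' h s), hgap.backup_le hV hΔ hh s (π' h s)]
  have hle_U {h} (hh : h ∈ Finset.Icc 1 (H + 1)) :=
    hU.le_add_sum_of_le_backup hV.apply_horizon_add_one (m := m) (hh := hh) fun h hh s => by
      linarith [hdiff h hh s (π h s), hV.eq_backup h hh s]
  refine backward_induction
    (P := fun h => ∀ s, W h s ≤ U h s + max 0 (2 * ∑ k ∈ Finset.Icc h H, m k - Δ))
    (fun s => by simp [hW.apply_horizon_add_one, hU.apply_horizon_add_one])
    (fun h hh ih s => ?_) hh
  have hsum := sum_Icc_eq_add_sum_Icc_succ m hh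
  rcases eq_or_ne (π' h s) (π h s) with hagree | hdeviate
  · have hm0 : 0 ≤ m h := (abs_nonneg _).trans (hm h hh (s, π h s))
    calc W h s ≤ U h s + max 0 (2 * ∑ k ∈ Finset.Icc (h + 1) H, m k - Δ) := by
          rw [hW.eq_backup h hh, hU.eq_backup h hh, hagree]
          exact M'.backup_le_backup_add hh ih s _
      _ ≤ U h s + max 0 (2 * ∑ k ∈ Finset.Icc h H, m k - Δ) := by
          refine add_le_add le_rfl (max_le_max_left 0 ?_)
          linarith
  · have hh' : h ∈ Finset.Icc 1 (H + 1) := Finset.Icc_subset_Icc_right (Nat.le_succ H) hh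
    have hsucc : h + 1 ∈ Finset.Icc 1 (H + 1) := by simp_all
    linarith [hW.eq_backup h hh s, M'.backup_le_backup_add hh (hW_le hsucc) s (π' h s),
      hdiff h hh s (π' h s), hgap h hh s _ hdeviate, hle_U hh' s,
      le_max_right 0 (2 * ∑ k ∈ Finset.Icc h H, m k - Δ)]

lemma HasGap.add_le_two_mul_sum (hgap : M.HasGap π V Δ) (hΔ : 0 ≤ Δ) (hV : M.IsPolicyValue π V)
    (hU : M'.IsPolicyValue π U) (hW : M'.IsPolicyValue π' W)
    (hm : ∀ h ∈ Finset.Icc 1 H, ∀ sa, |M.backupDiff M' V h sa| ≤ m h)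
    (hε : 0 ≤ ε) (hbad : ¬ ∀ s, W 1 s - ε ≤ U 1 s) :
    Δ + ε ≤ 2 * ∑ h ∈ Finset.Icc 1 H, m h := by
  obtain ⟨s, hs⟩ := not_forall.1 hbad
  have hadv := hgap.le_add_max hΔ hV hU hW hm (h := 1) (by simp) s
  have hlt : ε < max 0 (2 * ∑ h ∈ Finset.Icc 1 H, m h - Δ) := by linarith
  linarith [(lt_max_iff.1 hlt).resolve_left hε.not_gt]

end Comparison

end EpisodicMDP

theorem stmt_17_general {S A ι : Type*} [Fintype S] [Fintype A] [Nonempty (S × A)] [Fintype ι]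
    [DecidableEq ι] {H : ℕ} {M M' : EpisodicMDP S A H} {φ : S → A → ι → ℝ}
    (hM : M.IsLinear φ) (hM' : M'.IsLinear φ) {π π' : ℕ → S → A} {V U W : ℕ → S → ℝ}
    (hV : M.IsPolicyValue π V) {Δ : ℝ} (hΔ : 0 ≤ Δ) (hgap : M.HasGap π V Δ)
    {ω : ℕ → S × A → ℝ} (hω : ∀ h ∈ Finset.Icc 1 H, ∀ sa, 0 ≤ ω h sa)
    (hΛ : ∀ h ∈ Finset.Icc 1 H, IsUnit (designMatrix (Function.uncurry φ) (ω h)))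
    (hU : M'.IsPolicyValue π U) (hW : M'.IsPolicyValue π' W) {ε : ℝ} (hε : 0 ≤ ε)
    (hbad : ¬ ∀ s, W 1 s - ε ≤ U 1 s) :
    (((Δ + ε) ^ 2 /
        (2 * H ^ 2 * ∑ h ∈ Finset.Icc 1 H, maxLeverage (Function.uncurry φ) (ω h)) : ℝ) : EReal) ≤
      ∑ h ∈ Finset.Icc 1 H, ∑ sa : S × A, (ω h sa : EReal) * M.kl M' h sa.1 sa.2 := by
  refine le_trans (EReal.coe_le_coe_iff.2 ?_) (EpisodicMDP.coe_sum_sq_backupDiff_le_sum_kl hV hω)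
  set σ := fun h => maxLeverage (Function.uncurry φ) (ω h)
  set D := fun h => ∑ sa, ω h sa * M.backupDiff M' V h sa ^ 2
  have hσ (h) (hh : h ∈ Finset.Icc 1 H) : 0 ≤ σ h := maxLeverage_nonneg (hω h hh) (hΛ h hh)
  have hD (h) (hh : h ∈ Finset.Icc 1 H) : 0 ≤ D h :=
    Finset.sum_nonneg fun sa _ => mul_nonneg (hω h hh sa) (sq_nonneg _)
  have hcompare : Δ + ε ≤ 2 * ∑ h ∈ Finset.Icc 1 H, √(σ h * D h) :=
    hgap.add_le_two_mul_sum hΔ hV hU hW (fun h hh sa => Real.abs_le_sqrt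
      (EpisodicMDP.sq_backupDiff_le_maxLeverage_mul hM hM' (hω h hh) (hΛ h hh) hh V sa)) hε hbad
  have hcauchy : (∑ h ∈ Finset.Icc 1 H, √(σ h * D h)) ^ 2 ≤
      (∑ h ∈ Finset.Icc 1 H, σ h) * ∑ h ∈ Finset.Icc 1 H, D h :=
    Finset.sum_sq_le_sum_mul_sum_of_sq_le_mul _ hσ hD fun h hh =>
      (Real.sq_sqrt (mul_nonneg (hσ h hh) (hD h hh))).le
  have hσsum := Finset.sum_nonneg hσ
  have hDsum := Finset.sum_nonneg hD
  refine div_le_of_le_mul₀ (by positivity) (by positivity) ?_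
  calc (Δ + ε) ^ 2 ≤ (2 * ∑ h ∈ Finset.Icc 1 H, √(σ h * D h)) ^ 2 := by gcongr
    _ ≤ 4 * ((∑ h ∈ Finset.Icc 1 H, σ h) * ∑ h ∈ Finset.Icc 1 H, D h) := by linarith
    _ = 2 / H ^ 2 * (∑ h ∈ Finset.Icc 1 H, D h) * (2 * H ^ 2 * ∑ h ∈ Finset.Icc 1 H, σ h) := by
      rcases eq_or_ne H 0 with rfl | hH
      · simp
      · field_simp
        ring

theorem stmt_17 {S A : Type*} [Fintype S] [Fintype A] [Nonempty S] [Nonempty A]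
    [DecidableEq A]
    {d : ℕ} (φ : S → A → Fin d → ℝ) (H : ℕ) (hH : 1 ≤ H)
    (ε : ℝ) (hε : 0 < ε)
    -- the episodic MDP M : linear, reward distributions supported on [0,1]
    (p : ℕ → S → A → S → ℝ) (r : ℕ → S → A → ℝ)
    (hp0 : ∀ h ∈ Finset.Icc 1 H, ∀ s a s', 0 ≤ p h s a s')
    (hp1 : ∀ h ∈ Finset.Icc 1 H, ∀ s a, ∑ s', p h s a s' = 1)
    (θ : ℕ → Fin d → ℝ) (μ : ℕ → S → Fin d → ℝ)
    (hr : ∀ h ∈ Finset.Icc 1 H, ∀ s a, r h s a = φ s a ⬝ᵥ θ h)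
    (hP : ∀ h ∈ Finset.Icc 1 H, ∀ s a s', p h s a s' = φ s a ⬝ᵥ μ h s')
    (q : ℕ → S → A → Measure ℝ)
    (hq : ∀ h ∈ Finset.Icc 1 H, ∀ s a, IsProbabilityMeasure (q h s a))
    (hqsupp : ∀ h ∈ Finset.Icc 1 H, ∀ s a, q h s a (Set.Icc (0 : ℝ) 1)ᶜ = 0)
    (hqmean : ∀ h ∈ Finset.Icc 1 H, ∀ s a, (∫ x, x ∂q h s a) = r h s a)
    -- optimal value functions of M and its unique optimal policy
    (Vstar : ℕ → S → ℝ) (Qstar : ℕ → S → A → ℝ)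
    (hVstarTop : ∀ s, Vstar (H + 1) s = 0)
    (hQstar : ∀ h ∈ Finset.Icc 1 H, ∀ s a,
      Qstar h s a = r h s a + ∑ s', p h s a s' * Vstar (h + 1) s')
    (hVstar : ∀ h ∈ Finset.Icc 1 H, ∀ s,
      Vstar h s = univ.sup' univ_nonempty fun a => Qstar h s a)
    (πstar : ℕ → S → A)
    (hπ : ∀ h ∈ Finset.Icc 1 H, ∀ s a, a ≠ πstar h s →
      Qstar h s a < Qstar h s (πstar h s))
    -- the gap of M
    (T : Finset (ℕ × S × A))
    (hTdef : T = (Finset.Icc 1 H ×ˢ (univ : Finset (S × A))).filter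
      fun x : ℕ × S × A => x.2.2 ≠ πstar x.1 x.2.1)
    (hT : T.Nonempty)
    -- the allocations ω₁, …, ω_H, their feature matrices and σ(ω_h)
    (ω : ℕ → S × A → ℝ)
    (hω0 : ∀ h ∈ Finset.Icc 1 H, ∀ sa, 0 ≤ ω h sa)
    (hω1 : ∀ h ∈ Finset.Icc 1 H, ∑ sa, ω h sa = 1)
    (Λω : ℕ → Matrix (Fin d) (Fin d) ℝ)
    (hΛω : ∀ h ∈ Finset.Icc 1 H,
      Λω h = ∑ sa : S × A, ω h sa • vecMulVec (φ sa.1 sa.2) (φ sa.1 sa.2))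
    (hinv : ∀ h ∈ Finset.Icc 1 H, IsUnit (Λω h))
    (σω : ℕ → ℝ)
    (hσω : ∀ h ∈ Finset.Icc 1 H, σω h = univ.sup' univ_nonempty
      fun sa : S × A => φ sa.1 sa.2 ⬝ᵥ (Λω h)⁻¹.mulVec (φ sa.1 sa.2)) :
    -- for every alternative linear episodic MDP M' for which πstar is not ε-optimal
    ∀ (p' : ℕ → S → A → S → ℝ) (r' : ℕ → S → A → ℝ),
      (∀ h ∈ Finset.Icc 1 H, ∀ s a s', 0 ≤ p' h s a s') →
      (∀ h ∈ Finset.Icc 1 H, ∀ s a, ∑ s', p' h s a s' = 1) →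
      ∀ (θ' : ℕ → Fin d → ℝ) (μ' : ℕ → S → Fin d → ℝ),
      (∀ h ∈ Finset.Icc 1 H, ∀ s a, r' h s a = φ s a ⬝ᵥ θ' h) →
      (∀ h ∈ Finset.Icc 1 H, ∀ s a s', p' h s a s' = φ s a ⬝ᵥ μ' h s') →
      ∀ q' : ℕ → S → A → Measure ℝ,
      (∀ h ∈ Finset.Icc 1 H, ∀ s a, IsProbabilityMeasure (q' h s a)) →
      (∀ h ∈ Finset.Icc 1 H, ∀ s a, q' h s a (Set.Icc (0 : ℝ) 1)ᶜ = 0) →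
      (∀ h ∈ Finset.Icc 1 H, ∀ s a, (∫ x, x ∂q' h s a) = r' h s a) →
      ∀ (V'star : ℕ → S → ℝ) (Q'star : ℕ → S → A → ℝ),
      (∀ s, V'star (H + 1) s = 0) →
      (∀ h ∈ Finset.Icc 1 H, ∀ s a,
        Q'star h s a = r' h s a + ∑ s', p' h s a s' * V'star (h + 1) s') →
      (∀ h ∈ Finset.Icc 1 H, ∀ s,
        V'star h s = univ.sup' univ_nonempty fun a => Q'star h s a) →
      ∀ (Vpi' : ℕ → S → ℝ) (Qpi' : ℕ → S → A → ℝ),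
      (∀ s, Vpi' (H + 1) s = 0) →
      (∀ h ∈ Finset.Icc 1 H, ∀ s a,
        Qpi' h s a = r' h s a + ∑ s', p' h s a s' * Vpi' (h + 1) s') →
      (∀ h ∈ Finset.Icc 1 H, ∀ s, Vpi' h s = Qpi' h s (πstar h s)) →
      (¬ ∀ s, V'star 1 s - ε ≤ Vpi' 1 s) →
      (((3 * (T.inf' hT (fun x => Vstar x.1 x.2.1 - Qstar x.1 x.2.1 x.2.2) + ε) ^ 2 /
          (10 * H ^ 2 * ∑ h ∈ Finset.Icc 1 H, σω h) : ℝ) : EReal) ≤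
        ∑ h ∈ Finset.Icc 1 H, ∑ sa : S × A, ((ω h sa : ℝ) : EReal) *
          (klDiv (q h sa.1 sa.2) (q' h sa.1 sa.2) +
            klFin (p h sa.1 sa.2) (p' h sa.1 sa.2))) := by
  intro p' r' hp0' hp1' θ' μ' hr' hP' q' hq' hqsupp' hqmean' V'star Q'star hV'top hQ'star hV'star
    Vpi' Qpi' hVpi'top hQpi' hVpi' hbad
  let M : EpisodicMDP S A H := ⟨p, r, q, hp0, hp1, hq, hqsupp, hqmean⟩
  let M' : EpisodicMDP S A H := ⟨p', r', q', hp0', hp1', hq', hqsupp', hqmean'⟩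
  have hopt : M.IsOptimalValue Vstar Qstar := ⟨hVstarTop, hQstar, hVstar⟩
  have hopt' : M'.IsOptimalValue V'star Q'star := ⟨hV'top, hQ'star, hV'star⟩
  have hV : M.IsPolicyValue πstar Vstar := hopt.isPolicyValue fun h hh s a =>
    (eq_or_ne a (πstar h s)).elim (fun ha => ha ▸ le_rfl) fun ha => (hπ h hh s a ha).le
  have hU : M'.IsPolicyValue πstar Vpi' :=
    ⟨hVpi'top, fun h hh s => (hVpi' h hh s).trans (hQpi' h hh s _)⟩
  obtain ⟨π', hW⟩ := hopt'.exists_isPolicyValue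
  set Δ := T.inf' hT fun x => Vstar x.1 x.2.1 - Qstar x.1 x.2.1 x.2.2
  have hgap : M.HasGap πstar Vstar Δ := fun h hh s a ha => hopt.eq_backup h hh s a ▸
    T.inf'_le (fun x => Vstar x.1 x.2.1 - Qstar x.1 x.2.1 x.2.2) (b := (h, s, a)) (by simp_all)
  have hΔ : 0 ≤ Δ := Finset.le_inf' _ _ fun x hx => sub_nonneg.2 (hopt.le (by simp_all) _ _)
  have hdesign (h hh) : Λω h = designMatrix (Function.uncurry φ) (ω h) := hΛω h hh
  have hΛ (h hh) : IsUnit (designMatrix (Function.uncurry φ) (ω h)) := hdesign h hh ▸ hinv h hh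
  have hσ (h hh) : σω h = maxLeverage (Function.uncurry φ) (ω h) :=
    (hσω h hh).trans (hdesign h hh ▸ rfl)
  have hσ0 := Finset.sum_nonneg fun h hh => maxLeverage_nonneg (hω0 h hh) (hΛ h hh)
  rw [Finset.sum_congr rfl hσ]
  refine le_trans (EReal.coe_le_coe_iff.2 ?_) (stmt_17_general ⟨θ, μ, hr, hP⟩ ⟨θ', μ', hr', hP'⟩
    hV hΔ hgap hω0 hΛ hU hW hε.le hbad)
  calc 3 * (Δ + ε) ^ 2 / (10 * H ^ 2 * _)
      = 3 / 5 * ((Δ + ε) ^ 2 / (2 * H ^ 2 * _)) := by ring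
    _ ≤ _ := mul_le_of_le_one_left (by positivity) (by norm_num)
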